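/- arXiv:0809.2194 — 2 statements merged into one kernel-verified Lean document; each statement's English description precedes it below -/
import Mathlib

section
/- Let I be an ideal of the polynomial ring R = K[x_1,...,x_n] generated by squarefree monomials, and let φ: R → R be the K-algebra homomorphism sending f(x_1,...,x_n) to f(x_1^2,...,x_n^2). If q_1,...,q_h ∈ R satisfy √(q_1,...,q_h) = I, then φ(q_1),...,φ(q_h) ∈ I and √(φ(q_1),...,φ(q_h)) = I. -/
open MvPolynomial

section Core

variable {V : Type*} [DecidableEq V]

/-- `Δ` is a simplicial complex on the vertex set `V`: every singleton is a face
and faces are closed under taking subsets. -/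
def IsSimplicialComplex (Δ : Set (Finset V)) : Prop :=
  (∀ v : V, ({v} : Finset V) ∈ Δ) ∧ ∀ F ∈ Δ, ∀ G ⊆ F, G ∈ Δ

/-- The Stanley-Reisner ideal of `Δ` over `K`: generated by the squarefree monomials
whose support is not a face of `Δ`. -/
noncomputable def srIdeal (K : Type*) [Field K] (Δ : Set (Finset V)) :
    Ideal (MvPolynomial V K) :=
  Ideal.span ((fun S : Finset V => ∏ v ∈ S, (X v : MvPolynomial V K)) '' {S | S ∉ Δ})

/-- The simplicial complex `Δ ∪ co_{x₀} F` on the vertex set `V ∪ {x₀}`,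
realized as `Option V` with `none` playing the role of the new vertex `x₀`. -/
def coneUnion (Δ : Set (Finset V)) (F : Finset V) : Set (Finset (Option V)) :=
  ((fun G : Finset V => G.map Function.Embedding.some) '' Δ) ∪
    {G : Finset (Option V) | G ⊆ insert none (F.map Function.Embedding.some)}

/-- A facet is a maximal face. -/
def IsFacet (Δ : Set (Finset V)) (F : Finset V) : Prop :=
  F ∈ Δ ∧ ∀ G ∈ Δ, F ⊆ G → F = G

/-- The prime ideal `P_F` generated by the variables not in `F`. -/
noncomputable def facePrime (K : Type*) [Field K] (F : Finset V) :
    Ideal (MvPolynomial V K) :=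
  Ideal.span ((fun v : V => (X v : MvPolynomial V K)) '' {v : V | v ∉ F})

/-- The dimension of a simplicial complex. -/
noncomputable def scDim (Δ : Set (Finset V)) : ℕ := sSup (Finset.card '' Δ) - 1

/-- A subfacet of a (pure) complex: a face whose cardinality equals the dimension. -/
noncomputable def IsSubfacet (Δ : Set (Finset V)) (F : Finset V) : Prop :=
  F ∈ Δ ∧ F.card = scDim Δ

end Core

/-- The arithmetical rank of an ideal: the least number of elements generating it
up to radical. -/
noncomputable def ara {R : Type*} [CommRing R] (I : Ideal R) : ℕ :=
  sInf {s : ℕ | ∃ a : Fin s → R, (Ideal.span (Set.range a)).radical = I.radical}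

/-- The height of an ideal: the infimum of the heights of the primes containing it. -/
noncomputable def idealHeight {R : Type*} [CommRing R] (I : Ideal R) : ℕ∞ :=
  ⨅ p : {p : PrimeSpectrum R // I ≤ p.asIdeal}, Order.height p.1

/-!
The substitution `xⱼ ↦ xⱼ ^ k` sends every monomial to its `k`-th power, so it leaves a monomial
ideal unchanged up to radical. Since `√(f(√J)) = √(f(J))` for every ring homomorphism `f`, extending
along the substitution respects equality up to radical, and so `√J = √I` gives
`√(f(J)) = √(f(I)) = √I`.
-/

section Radical

variable {A B : Type*} [CommSemiring A] [CommSemiring B]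

theorem radical_map_radical (f : A →+* B) (I : Ideal A) :
    (I.radical.map f).radical = (I.map f).radical :=
  le_antisymm (Ideal.radical_le_radical_iff.mpr (Ideal.map_radical_le f))
    (Ideal.radical_mono (Ideal.map_mono Ideal.le_radical))

theorem radical_map_congr (f : A →+* B) {I J : Ideal A} (h : I.radical = J.radical) :
    (I.map f).radical = (J.map f).radical := by
  rw [← radical_map_radical f I, h, radical_map_radical]

theorem radical_span_image_pow {k : ℕ} (hk : k ≠ 0) (s : Set A) :
    (Ideal.span ((· ^ k) '' s)).radical = (Ideal.span s).radical := by
  refine le_antisymm (Ideal.radical_mono (Ideal.span_le.mpr ?_))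
    (Ideal.radical_le_radical_iff.mpr (Ideal.span_le.mpr ?_))
  · rintro _ ⟨a, ha, rfl⟩
    exact Ideal.pow_mem_of_mem _ (Ideal.subset_span ha) k (Nat.pos_of_ne_zero hk)
  · exact fun a ha ↦ ⟨k, Ideal.subset_span ⟨a, ha, rfl⟩⟩

end Radical

section Monomial

variable {σ R : Type*} [CommSemiring R]

theorem expand_monomial_one_eq_pow (k : ℕ) (d : σ →₀ ℕ) :
    expand k (monomial d (1 : R)) = monomial d 1 ^ k := by
  rw [expand_monomial, monomial_pow, one_pow]

theorem radical_map_expand_span_monomial {k : ℕ} (hk : k ≠ 0) (S : Set (σ →₀ ℕ)) :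
    ((Ideal.span ((monomial · (1 : R)) '' S)).map (expand k)).radical =
      (Ideal.span ((monomial · (1 : R)) '' S)).radical := by
  simpa only [Ideal.map_span, Set.image_image, expand_monomial_one_eq_pow] using
    radical_span_image_pow hk ((monomial · (1 : R)) '' S)

theorem prod_X_eq_monomial_indicator (s : Finset σ) :
    ∏ v ∈ s, (X v : MvPolynomial σ R) = monomial (Finsupp.indicator s fun _ _ ↦ 1) 1 := by
  simpa only [pow_one] using prod_X_pow (R := R) (fun _ ↦ 1) s

theorem span_prod_X_eq_span_monomial (S : Set (Finset σ)) :
    Ideal.span ((fun s ↦ ∏ v ∈ s, (X v : MvPolynomial σ R)) '' S) =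
      Ideal.span ((monomial · 1) '' ((fun s ↦ Finsupp.indicator s fun _ _ ↦ 1) '' S)) := by
  simp only [Set.image_image, prod_X_eq_monomial_indicator]

end Monomial

theorem radical_span_squares_general {σ R ι : Type*} [CommSemiring R] {k : ℕ} (hk : k ≠ 0)
    (I : Ideal (MvPolynomial σ R))
    (hI : ∃ S : Set (σ →₀ ℕ), I = Ideal.span ((monomial · 1) '' S))
    (q : ι → MvPolynomial σ R) (hq : (Ideal.span (Set.range q)).radical = I.radical) :
    (∀ i, expand k (q i) ∈ I.radical) ∧
      (Ideal.span (Set.range fun i ↦ expand k (q i))).radical = I.radical := by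
  obtain ⟨S, rfl⟩ := hI
  have hradical : (Ideal.span (Set.range fun i ↦ expand k (q i))).radical =
      (Ideal.span ((monomial · (1 : R)) '' S)).radical :=
    calc (Ideal.span (Set.range fun i ↦ expand k (q i))).radical
        = ((Ideal.span (Set.range q)).map (expand k)).radical := by
          rw [Ideal.map_span, ← Set.range_comp, Function.comp_def]
      _ = ((Ideal.span ((monomial · (1 : R)) '' S)).map (expand k)).radical :=
          radical_map_congr (expand k).toRingHom hq
      _ = (Ideal.span ((monomial · 1) '' S)).radical := radical_map_expand_span_monomial hk S
  exact ⟨fun i ↦ hradical ▸ Ideal.le_radical (Ideal.subset_span ⟨i, rfl⟩), hradical⟩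

/-- if `I` is generated by squarefree monomials and `q₁,…,q_h` generate `I`
up to radical, then the images `φ(qᵢ)` under the substitution `xⱼ ↦ xⱼ²` lie in `I` and
still generate `I` up to radical. -/
theorem radical_span_squares {V : Type*} [DecidableEq V] {K : Type*} [Field K]
    (I : Ideal (MvPolynomial V K))
    (hI : ∃ S : Set (Finset V),
      I = Ideal.span ((fun s : Finset V => ∏ v ∈ s, (X v : MvPolynomial V K)) '' S))
    {h : ℕ} (q : Fin h → MvPolynomial V K)
    (hq : (Ideal.span (Set.range q)).radical = I) :
    (∀ i, aeval (fun v : V => (X v : MvPolynomial V K) ^ 2) (q i) ∈ I) ∧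
      (Ideal.span (Set.range fun i =>
        aeval (fun v : V => (X v : MvPolynomial V K) ^ 2) (q i))).radical = I := by
  obtain ⟨S, hS⟩ := hI
  have hrad : I.radical = I := by rw [← hq, Ideal.radical_idem]
  simpa only [hrad, expand, bind₁] using radical_span_squares_general two_ne_zero I
    ⟨_, hS.trans (span_prod_X_eq_span_monomial S)⟩ q (hq.trans hrad.symm)
end

section
/- Let K be an algebraically closed field, Δ a simplicial complex on the vertex set X = {x_1,...,x_n}, F a face of Δ, and Δ' = Δ ∪ co_{x_0}F. Then ara I_{Δ'} ≤ max(ara I_Δ + 1, n − |F|). -/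
open MvPolynomial

/-!
Write `φ` for the inclusion `K[V] → K[V ∪ {x₀}]` and `P_F` for the ideal of the variables outside
`F`, so that `I_{Δ'} = φ(I_Δ) + x₀ P_F`. Put `n + 1 = max (ara I_Δ + 1) (|V| - |F|)`. There is a
face `G` of `Δ` with `P_F = P_G + (z)` and `P_G` generated by `n` elements `y₁, …, yₙ`: if `F` is
not a facet, add a vertex to it; if it is, take `G = F` and `z = 0`, since `P_F` is then a minimal
prime of `I_Δ` and Krull's height theorem gives `|V| - |F| ≤ ara I_Δ ≤ n`.

Let `a₁, …, aₙ` generate `I_Δ` up to radical; they lie in `P_G`. So `aᵢ² = ∑ⱼ Aᵢⱼ yⱼ` with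
`Aᵢⱼ ∈ P_G`, and `aᵢ² + x₀ yᵢ` is the `i`-th entry of `(x₀ + A) y`. By Cramer's rule,
`d = det (x₀ + A)` multiplies every `yᵢ` into the ideal of these `n` elements, while
`d ≡ x₀ⁿ` modulo `P_G`. Adding `x₀ (z d + (d - x₀ⁿ))` as the last element therefore forces,
modulo a prime not containing `x₀`, first `d ≠ 0`, then `y = 0` and finally `z = 0`.
-/

section Determinant

open Matrix

variable {R ι : Type*} [CommRing R] [Fintype ι]

theorem det_scalar_add_sub_pow_mem [DecidableEq ι] {I : Ideal R} (x : R) {A : Matrix ι ι R}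
    (hA : ∀ i j, A i j ∈ I) : (scalar ι x + A).det - x ^ Fintype.card ι ∈ I := by
  let π := Ideal.Quotient.mk I
  have hπA : π.mapMatrix A = 0 := by
    ext i j
    exact Ideal.Quotient.eq_zero_iff_mem.2 (hA i j)
  have hπx : π.mapMatrix (scalar ι x) = scalar ι (π x) := by
    simp [scalar_apply, diagonal_map]
  rw [← Ideal.Quotient.eq_zero_iff_mem, map_sub, map_pow, RingHom.map_det, map_add, hπA, hπx,
    add_zero, scalar_apply, det_diagonal, Finset.prod_const, Finset.card_univ, sub_self]

theorem det_mul_mem_of_mulVec_mem [DecidableEq ι] {I : Ideal R} {M : Matrix ι ι R} {y : ι → R}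
    (hMy : ∀ i, (M *ᵥ y) i ∈ I) (i : ι) : M.det * y i ∈ I := by
  have cramer : M.adjugate *ᵥ (M *ᵥ y) = M.det • y := by
    rw [mulVec_mulVec, adjugate_mul, smul_mulVec, one_mulVec]
  rw [← smul_eq_mul, ← Pi.smul_apply, ← cramer]
  exact Ideal.sum_mem _ fun j _ => I.mul_mem_left _ (hMy j)

theorem exists_matrix_mulVec_eq_sq {a y : ι → R} (ha : ∀ i, a i ∈ Ideal.span (Set.range y)) :
    ∃ A : Matrix ι ι R, (∀ i j, A i j ∈ Ideal.span (Set.range y)) ∧ A *ᵥ y = a ^ 2 := by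
  choose f hf using fun i => Ideal.mem_span_range_iff_exists_fun.1 (ha i)
  refine ⟨.of fun i j => a i * f i j, fun i j => Ideal.mul_mem_right _ _ (ha i), funext fun i => ?_⟩
  simp only [mulVec, dotProduct, of_apply, mul_assoc, ← Finset.mul_sum, hf, Pi.pow_apply, sq]

theorem exists_sub_pow_mem_and_mul_mem_span (x : R) {a y : ι → R}
    (ha : ∀ i, a i ∈ Ideal.span (Set.range y)) :
    ∃ d, d - x ^ Fintype.card ι ∈ Ideal.span (Set.range y) ∧
      ∀ i, d * y i ∈ Ideal.span (Set.range fun i => a i ^ 2 + x * y i) := by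
  classical
  obtain ⟨A, hA, hAy⟩ := exists_matrix_mulVec_eq_sq ha
  refine ⟨(scalar ι x + A).det, det_scalar_add_sub_pow_mem x hA, det_mul_mem_of_mulVec_mem ?_⟩
  intro i
  have key : ((scalar ι x + A) *ᵥ y) i = a i ^ 2 + x * y i := by
    rw [add_mulVec, Pi.add_apply, hAy, scalar_apply, mulVec_diagonal, Pi.pow_apply, add_comm]
  rw [key]
  exact Ideal.subset_span (Set.mem_range_self i)

end Determinant

section RadicalGenerators

variable {R ι : Type*} [CommRing R] {x z d : R} {a y : ι → R} {n : ℕ}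

theorem span_insert_range_sq_add_le (hd : d - x ^ n ∈ Ideal.span (Set.range y)) :
    Ideal.span (insert (x * (z * d + (d - x ^ n))) (Set.range fun i => a i ^ 2 + x * y i)) ≤
      Ideal.span (Set.range a) ⊔
        Ideal.span {x} * (Ideal.span (Set.range y) ⊔ Ideal.span {z}) := by
  have x_mul_mem {t : R} (ht : t ∈ Ideal.span (Set.range y) ⊔ Ideal.span {z}) :
      x * t ∈ Ideal.span (Set.range a) ⊔
        Ideal.span {x} * (Ideal.span (Set.range y) ⊔ Ideal.span {z}) :=
    Ideal.mem_sup_right (Ideal.mul_mem_mul (Ideal.mem_span_singleton_self x) ht)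
  rw [Ideal.span_le, Set.insert_subset_iff, Set.range_subset_iff]
  refine ⟨x_mul_mem ?_, fun i => Ideal.add_mem _ ?_ (x_mul_mem ?_)⟩
  · exact Ideal.add_mem _
      (Ideal.mul_mem_right _ _ (Ideal.mem_sup_right (Ideal.mem_span_singleton_self z)))
      (Ideal.mem_sup_left hd)
  · exact Ideal.mem_sup_left
      (Ideal.pow_mem_of_mem _ (Ideal.subset_span (Set.mem_range_self i)) 2 two_pos)
  · exact Ideal.mem_sup_left (Ideal.subset_span (Set.mem_range_self i))

theorem le_of_isPrime_of_span_insert_range_sq_add_le (ha : ∀ i, a i ∈ Ideal.span (Set.range y))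
    (hd : d - x ^ n ∈ Ideal.span (Set.range y))
    (hdy : ∀ i, d * y i ∈ Ideal.span (Set.range fun i => a i ^ 2 + x * y i))
    {p : Ideal R} (hp : p.IsPrime)
    (hle : Ideal.span
      (insert (x * (z * d + (d - x ^ n))) (Set.range fun i => a i ^ 2 + x * y i)) ≤ p) :
    Ideal.span (Set.range a) ⊔
      Ideal.span {x} * (Ideal.span (Set.range y) ⊔ Ideal.span {z}) ≤ p := by
  rw [Ideal.span_insert, sup_le_iff, Ideal.span_singleton_le_iff_mem] at hle
  obtain ⟨hlast, hrange⟩ := hle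
  by_cases hx : x ∈ p
  · refine sup_le (Ideal.span_le.2 (Set.range_subset_iff.2 fun i => ?_))
      (Ideal.mul_le_left.trans ((Ideal.span_singleton_le_iff_mem _).2 hx))
    have hi : a i ^ 2 + x * y i ∈ p := hrange (Ideal.subset_span (Set.mem_range_self i))
    exact hp.mem_of_pow_mem 2 ((p.add_mem_iff_left (p.mul_mem_right _ hx)).1 hi)
  · have hlast' : z * d + (d - x ^ n) ∈ p := (hp.mem_or_mem hlast).resolve_left hx
    -- If `d ∈ p`, the last generator leaves only `x ^ n`.
    have hdp : d ∉ p := fun hdp => hx <| hp.mem_of_pow_mem n <|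
      (p.sub_mem_iff_right hdp).1 ((p.add_mem_iff_right (p.mul_mem_left z hdp)).1 hlast')
    have hy : Ideal.span (Set.range y) ≤ p := Ideal.span_le.2 <| Set.range_subset_iff.2 fun i =>
      (hp.mem_or_mem (hrange (hdy i))).resolve_left hdp
    have hz : z ∈ p :=
      (hp.mem_or_mem ((p.add_mem_iff_left (hy hd)).1 hlast')).resolve_right hdp
    exact sup_le (Ideal.span_le.2 (Set.range_subset_iff.2 fun i => hy (ha i)))
      (Ideal.mul_le_right.trans (sup_le hy ((Ideal.span_singleton_le_iff_mem _).2 hz)))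

theorem exists_radical_span_insert_eq [Finite ι] (x z : R)
    (ha : ∀ i, a i ∈ Ideal.span (Set.range y)) :
    ∃ b, (Ideal.span (insert b (Set.range fun i => a i ^ 2 + x * y i))).radical =
      (Ideal.span (Set.range a) ⊔
        Ideal.span {x} * (Ideal.span (Set.range y) ⊔ Ideal.span {z})).radical := by
  have := Fintype.ofFinite ι
  obtain ⟨d, hd, hdy⟩ := exists_sub_pow_mem_and_mul_mem_span x ha
  refine ⟨x * (z * d + (d - x ^ Fintype.card ι)),
    le_antisymm (Ideal.radical_mono (span_insert_range_sq_add_le hd)) ?_⟩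
  rw [Ideal.radical_le_radical_iff, Ideal.radical_eq_sInf]
  exact le_sInf fun p ⟨hle, hp⟩ => le_of_isPrime_of_span_insert_range_sq_add_le ha hd hdy hp hle

end RadicalGenerators

section ArithmeticalRank

variable {R : Type*} [CommRing R]

theorem span_range_extend_zero {ι κ : Type*} (e : ι ↪ κ) (a : ι → R) :
    Ideal.span (Set.range (Function.extend e a 0)) = Ideal.span (Set.range a) := by
  have hzero : Ideal.span ((0 : κ → R) '' (Set.range e)ᶜ) = ⊥ :=
    Ideal.span_eq_bot.2 (by rintro _ ⟨_, _, rfl⟩; rfl)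
  rw [Set.range_extend e.injective, Ideal.span_union, hzero, sup_bot_eq]

theorem exists_radical_span_range_eq [IsNoetherianRing R] (I : Ideal R) :
    ∃ a : Fin (ara I) → R, (Ideal.span (Set.range a)).radical = I.radical := by
  obtain ⟨s, a, ha⟩ := Submodule.fg_iff_exists_fin_generating_family.1 (IsNoetherian.noetherian I)
  exact Nat.sInf_mem (s := {s | ∃ a : Fin s → R, (Ideal.span (Set.range a)).radical = I.radical})
    ⟨s, a, congrArg Ideal.radical ha⟩

theorem ara_le_iff [IsNoetherianRing R] {I : Ideal R} {n : ℕ} :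
    ara I ≤ n ↔ ∃ a : Fin n → R, (Ideal.span (Set.range a)).radical = I.radical := by
  refine ⟨fun hn => ?_, fun h => Nat.sInf_le h⟩
  obtain ⟨a, ha⟩ := exists_radical_span_range_eq I
  exact ⟨Function.extend (Fin.castLEEmb hn) a 0, by rw [span_range_extend_zero, ha]⟩

theorem ara_map_le {S T : Type*} [CommRing S] [IsNoetherianRing R] [FunLike T R S]
    [RingHomClass T R S] (f : T) (I : Ideal R) :
    ara (I.map f) ≤ ara I := by
  obtain ⟨a, ha⟩ := exists_radical_span_range_eq I
  refine Nat.sInf_le ⟨f ∘ a, ?_⟩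
  have radical_map_le {J₁ J₂ : Ideal R} (h : J₁.radical = J₂.radical) :
      (J₁.map f).radical ≤ (J₂.map f).radical :=
    Ideal.radical_le_radical_iff.2 <|
      (Ideal.map_mono (Ideal.le_radical.trans h.le)).trans (Ideal.map_radical_le f)
  rw [Set.range_comp, ← Ideal.map_span]
  exact le_antisymm (radical_map_le ha) (radical_map_le ha.symm)

theorem height_le_ara_of_mem_minimalPrimes [IsNoetherianRing R] {I p : Ideal R}
    (hp : p ∈ I.minimalPrimes) : p.height ≤ ara I := by
  obtain ⟨a, ha⟩ := exists_radical_span_range_eq I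
  rw [← Ideal.radical_minimalPrimes, ← ha, Ideal.radical_minimalPrimes] at hp
  refine (Ideal.height_le_card_of_mem_minimalPrimes_span (Set.finite_range a) hp).trans ?_
  have hncard : (Set.range a).ncard ≤ ara I := by
    simpa using Set.ncard_image_le (f := a) Set.finite_univ
  exact_mod_cast hncard

theorem ara_sup_span_singleton_mul_le [IsNoetherianRing R] {I : Ideal R} {n : ℕ} (hI : ara I ≤ n)
    {y : Fin n → R} (hIy : I.radical ≤ Ideal.span (Set.range y)) (x z : R) :
    ara (I ⊔ Ideal.span {x} * (Ideal.span (Set.range y) ⊔ Ideal.span {z})) ≤ n + 1 := by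
  obtain ⟨a, ha⟩ := ara_le_iff.1 hI
  have hay (i : Fin n) : a i ∈ Ideal.span (Set.range y) :=
    hIy (ha ▸ Ideal.le_radical (Ideal.subset_span (Set.mem_range_self i)))
  obtain ⟨b, hb⟩ := exists_radical_span_insert_eq x z hay
  refine ara_le_iff.2 ⟨Fin.cons b fun i => a i ^ 2 + x * y i, ?_⟩
  rw [Fin.range_cons, hb, Ideal.radical_sup, ha, ← Ideal.radical_sup]

end ArithmeticalRank

section FacePrime

theorem isPrime_span_X_image {σ R : Type*} [CommRing R] [IsDomain R] (s : Set σ) :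
    (Ideal.span (X '' s : Set (MvPolynomial σ R))).IsPrime := by
  classical
  let P := Ideal.span (X '' s : Set (MvPolynomial σ R))
  let kill : MvPolynomial σ R →ₐ[R] MvPolynomial σ R := aeval fun v => if v ∈ s then 0 else X v
  have mk_comp_kill : (Ideal.Quotient.mkₐ R P).comp kill = Ideal.Quotient.mkₐ R P := by
    ext v
    by_cases hv : v ∈ s
    · have hvP : X v ∈ P := Ideal.subset_span (Set.mem_image_of_mem X hv)
      simp [kill, hv, Ideal.Quotient.eq_zero_iff_mem.2 hvP]
    · simp [kill, hv]
  have hker : P = RingHom.ker kill := by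
    refine le_antisymm (Ideal.span_le.2 ?_) fun f hf => ?_
    · rintro _ ⟨v, hv, rfl⟩
      simp [kill, hv]
    · rw [← Ideal.Quotient.eq_zero_iff_mem, ← Ideal.Quotient.mkₐ_eq_mk R, ← mk_comp_kill,
        AlgHom.comp_apply, (RingHom.mem_ker).1 hf, map_zero]
  change P.IsPrime
  rw [hker]
  exact RingHom.ker_isPrime _

variable {V : Type*} {K : Type*} [Field K]

theorem facePrime_isPrime (F : Finset V) : (facePrime K F).IsPrime :=
  isPrime_span_X_image _

theorem X_mem_facePrime_iff {F : Finset V} {v : V} :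
    (X v : MvPolynomial V K) ∈ facePrime K F ↔ v ∉ F := by
  classical
  refine mem_ideal_span_X_image.trans ?_
  simp [support_X, Finsupp.single_apply]

theorem facePrime_lt_facePrime {F G : Finset V} (h : F ⊂ G) : facePrime K G < facePrime K F := by
  obtain ⟨hFG, v, hvG, hvF⟩ := Set.ssubset_iff_exists.1 (Finset.coe_ssubset.2 h)
  refine SetLike.lt_iff_le_and_exists.2 ⟨Ideal.span_mono (Set.image_mono ?_), X v, ?_, ?_⟩
  · exact fun w hw hwF => hw (hFG hwF)
  · exact X_mem_facePrime_iff.2 hvF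
  · exact fun hv => X_mem_facePrime_iff.1 hv hvG

theorem facePrime_insert_sup_span_X [DecidableEq V] {F : Finset V} {w : V} (hw : w ∉ F) :
    facePrime K (insert w F) ⊔ Ideal.span {X w} = facePrime K F := by
  have hset : {v | v ∉ insert w F} ∪ {w} = {v | v ∉ F} := by
    ext v
    by_cases hv : v = w <;> simp [hv, hw]
  rw [facePrime, facePrime, ← hset, Set.image_union, Set.image_singleton, Ideal.span_union]

theorem map_rename_some_facePrime (F : Finset V) :
    (facePrime K F).map (rename some) = facePrime K F.insertNone := by
  have hset : {v | v ∉ F.insertNone} = some '' {v | v ∉ F} := by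
    ext (_ | v) <;> simp
  rw [facePrime, facePrime, hset, Ideal.map_span, Set.image_image, Set.image_image]
  simp only [rename_X]

theorem card_compl_le_height_facePrime [Fintype V] [DecidableEq V] (F : Finset V) :
    (Fᶜ.card : ℕ∞) ≤ (facePrime K F).height := by
  suffices h : ∀ T : Finset V, (T.card : ℕ∞) ≤ (facePrime K Tᶜ).height by
    simpa using h Fᶜ
  intro T
  induction T using Finset.induction_on with
  | empty => simp
  | insert v T hv ih =>
    have := facePrime_isPrime (K := K) Tᶜ
    have := facePrime_isPrime (K := K) (insert v T)ᶜ
    have hlt : facePrime K Tᶜ < facePrime K (insert v T)ᶜ :=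
      facePrime_lt_facePrime (compl_lt_compl_iff_lt.2 (Finset.ssubset_insert hv))
    rw [Finset.card_insert_of_notMem hv, Nat.cast_succ]
    exact (add_le_add_left ih 1).trans (Ideal.height_add_one_le_of_lt_of_isPrime hlt)

theorem exists_span_range_eq_facePrime [Fintype V] [DecidableEq V] {F : Finset V} {n : ℕ}
    (hn : Fᶜ.card ≤ n) :
    ∃ y : Fin n → MvPolynomial V K, Ideal.span (Set.range y) = facePrime K F := by
  have ⟨e⟩ : Nonempty ({v // v ∉ F} ↪ Fin n) :=
    Function.Embedding.nonempty_of_card_le (by simpa [Finset.card_compl] using hn)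
  refine ⟨Function.extend e (fun v => X v.1) 0, ?_⟩
  rw [span_range_extend_zero, facePrime, Set.image_eq_range]
  rfl

end FacePrime

section StanleyReisner

variable {V : Type*} {K : Type*} [Field K] {Δ : Set (Finset V)} {F : Finset V}

theorem srIdeal_le_facePrime (hΔ : IsLowerSet Δ) (hF : F ∈ Δ) :
    srIdeal K Δ ≤ facePrime K F := by
  refine Ideal.span_le.2 ?_
  rintro _ ⟨S, hS, rfl⟩
  obtain ⟨v, hvS, hvF⟩ := Finset.not_subset.1 fun hSF : S ⊆ F => hS (hΔ hSF hF)
  exact Ideal.mem_of_dvd _ (Finset.dvd_prod_of_mem _ hvS) (X_mem_facePrime_iff.2 hvF)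

theorem mem_of_srIdeal_le_of_forall_X_notMem {p : Ideal (MvPolynomial V K)} (hp : p.IsPrime)
    (hle : srIdeal K Δ ≤ p) {G : Finset V} (hG : ∀ v ∈ G, X v ∉ p) : G ∈ Δ := by
  by_contra hGΔ
  obtain ⟨v, hv, hvp⟩ := hp.prod_mem_iff.1 (hle (Ideal.subset_span ⟨G, hGΔ, rfl⟩))
  exact hG v hv hvp

theorem facePrime_mem_minimalPrimes (hΔ : IsLowerSet Δ) (hF : IsFacet Δ F) :
    facePrime K F ∈ (srIdeal K Δ).minimalPrimes := by
  classical
  refine ⟨⟨facePrime_isPrime F, srIdeal_le_facePrime hΔ hF.1⟩, fun p ⟨hp, hle⟩ hpF => ?_⟩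
  refine Ideal.span_le.2 ?_
  rintro _ ⟨v, hv, rfl⟩
  by_contra hvp
  have hFp : ∀ w ∈ F, X w ∉ p := fun w hw hwp => X_mem_facePrime_iff.1 (hpF hwp) hw
  have hface : insert v F ∈ Δ := mem_of_srIdeal_le_of_forall_X_notMem hp hle
    (Finset.forall_mem_insert _ _ _ |>.2 ⟨hvp, hFp⟩)
  exact hv (hF.2 _ hface (Finset.subset_insert v F) ▸ Finset.mem_insert_self v F)

theorem card_compl_le_ara_of_isFacet [Fintype V] [DecidableEq V] (hΔ : IsLowerSet Δ)
    (hF : IsFacet Δ F) : Fᶜ.card ≤ ara (srIdeal K Δ) := by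
  exact_mod_cast (card_compl_le_height_facePrime F).trans
    (height_le_ara_of_mem_minimalPrimes (facePrime_mem_minimalPrimes (K := K) hΔ hF))

theorem exists_insert_mem_of_not_isFacet [DecidableEq V] (hΔ : IsLowerSet Δ) (hF : F ∈ Δ)
    (hfacet : ¬ IsFacet Δ F) : ∃ w ∉ F, insert w F ∈ Δ := by
  have ⟨G, hG, hFG, hne⟩ : ∃ G ∈ Δ, F ⊆ G ∧ F ≠ G := by
    simpa [IsFacet, hF] using hfacet
  obtain ⟨w, hw, hwG⟩ := Finset.ssubset_iff.1 (hFG.ssubset_of_ne hne)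
  exact ⟨w, hw, hΔ hwG hG⟩

theorem exists_facePrime_sup_span_singleton_eq [Fintype V] [DecidableEq V] (hΔ : IsLowerSet Δ)
    (hF : F ∈ Δ) {n : ℕ} (hara : ara (srIdeal K Δ) ≤ n) (hcard : Fᶜ.card ≤ n + 1) :
    ∃ G ∈ Δ, Gᶜ.card ≤ n ∧ ∃ z, facePrime K G ⊔ Ideal.span {z} = facePrime K F := by
  by_cases hfacet : IsFacet Δ F
  · exact ⟨F, hF, (card_compl_le_ara_of_isFacet hΔ hfacet).trans hara, 0, by simp⟩
  · obtain ⟨w, hw, hwF⟩ := exists_insert_mem_of_not_isFacet hΔ hF hfacet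
    refine ⟨insert w F, hwF, ?_, X w, facePrime_insert_sup_span_X hw⟩
    rw [Finset.card_compl] at hcard ⊢
    rw [Finset.card_insert_of_notMem hw]
    omega

end StanleyReisner

section Cone

variable {V : Type*} {K : Type*} [Field K] {Δ : Set (Finset V)} {F : Finset V}

theorem prod_X_mem_span_X_none_mul_facePrime {S : Finset (Option V)} (hnone : none ∈ S)
    (hS : ¬ S ⊆ F.insertNone) :
    ∏ v ∈ S, X v ∈ Ideal.span {X none} * facePrime K F.insertNone := by
  classical
  obtain ⟨v, hvS, hvF⟩ := Finset.not_subset.1 hS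
  have hne : none ≠ v := fun h => hvF (h ▸ Finset.none_mem_insertNone)
  have hmul : X none * X v ∈ Ideal.span {X none} * facePrime K F.insertNone :=
    Ideal.mul_mem_mul (Ideal.mem_span_singleton_self _) (X_mem_facePrime_iff.2 hvF)
  rw [← Finset.prod_pair hne] at hmul
  exact Ideal.mem_of_dvd _
    (Finset.prod_dvd_prod_of_subset _ _ _ (Finset.insert_subset hnone (by simpa using hvS))) hmul

variable [DecidableEq V]

theorem map_some_mem_coneUnion_iff (hΔ : IsLowerSet Δ) (hF : F ∈ Δ) {S : Finset V} :
    S.map .some ∈ coneUnion Δ F ↔ S ∈ Δ := by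
  constructor
  · rintro (⟨G, hG, hGS⟩ | hSF)
    · exact Finset.map_injective _ hGS ▸ hG
    · refine hΔ (fun v hv => ?_) hF
      simpa using hSF (Finset.mem_map_of_mem .some hv)
  · exact fun hS => Or.inl ⟨S, hS, rfl⟩

theorem mem_coneUnion_iff_of_none_mem {S : Finset (Option V)} (hS : none ∈ S) :
    S ∈ coneUnion Δ F ↔ S ⊆ F.insertNone := by
  have hcone : insert none (F.map .some) = F.insertNone := by
    ext (_ | v) <;> simp
  rw [← hcone]
  refine ⟨fun h => h.resolve_left ?_, Or.inr⟩
  rintro ⟨G, -, rfl⟩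
  simp at hS

theorem map_rename_srIdeal_le (hΔ : IsLowerSet Δ) (hF : F ∈ Δ) :
    (srIdeal K Δ).map (rename some) ≤ srIdeal K (coneUnion Δ F) := by
  rw [srIdeal, Ideal.map_span, Ideal.span_le]
  rintro _ ⟨_, ⟨S, hS, rfl⟩, rfl⟩
  exact Ideal.subset_span ⟨S.map .some, (map_some_mem_coneUnion_iff hΔ hF).not.2 hS,
    by simp [map_prod]⟩

theorem span_X_none_mul_facePrime_le :
    Ideal.span {X none} * facePrime K F.insertNone ≤ srIdeal K (coneUnion Δ F) := by
  rw [facePrime, Ideal.span_mul_span', Ideal.span_le]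
  rintro _ ⟨_, rfl, _, ⟨v, hv, rfl⟩, rfl⟩
  have hne : none ≠ v := fun h => hv (h ▸ Finset.none_mem_insertNone)
  refine Ideal.subset_span ⟨{none, v}, ?_, Finset.prod_pair hne⟩
  refine (mem_coneUnion_iff_of_none_mem (Finset.mem_insert_self _ _)).not.2 fun h => hv (h ?_)
  exact Finset.mem_insert_of_mem (Finset.mem_singleton_self v)

theorem srIdeal_coneUnion (hΔ : IsLowerSet Δ) (hF : F ∈ Δ) :
    srIdeal K (coneUnion Δ F) =
      (srIdeal K Δ).map (rename some) ⊔ Ideal.span {X none} * facePrime K F.insertNone := by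
  refine le_antisymm (Ideal.span_le.2 ?_)
    (sup_le (map_rename_srIdeal_le hΔ hF) span_X_none_mul_facePrime_le)
  rintro _ ⟨S, hS, rfl⟩
  by_cases hnone : none ∈ S
  · exact Ideal.mem_sup_right <| prod_X_mem_span_X_none_mul_facePrime hnone <|
      (mem_coneUnion_iff_of_none_mem hnone).not.1 hS
  · obtain ⟨T, rfl⟩ : ∃ T : Finset V, T.map .some = S :=
      ⟨S.eraseNone, by rw [Finset.map_some_eraseNone, Finset.erase_eq_of_notMem hnone]⟩
    have hT : T ∉ Δ := (map_some_mem_coneUnion_iff hΔ hF).not.1 hS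
    refine Ideal.mem_sup_left ?_
    have hprod : ∏ v ∈ T, X v ∈ srIdeal K Δ := Ideal.subset_span ⟨T, hT, rfl⟩
    simpa [map_prod] using Ideal.mem_map_of_mem (rename some) hprod

end Cone

theorem ara_coneUnion_le_general {V : Type*} [Fintype V] [DecidableEq V] (K : Type*) [Field K]
    {Δ : Set (Finset V)} (hΔ : IsLowerSet Δ) {F : Finset V} (hF : F ∈ Δ) :
    ara (srIdeal K (coneUnion Δ F)) ≤
      max (ara (srIdeal K Δ) + 1) (Fintype.card V - F.card) := by
  obtain ⟨n, hn⟩ : ∃ n, max (ara (srIdeal K Δ) + 1) (Fintype.card V - F.card) = n + 1 :=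
    Nat.exists_eq_succ_of_ne_zero (by omega)
  have hara : ara (srIdeal K Δ) ≤ n := by omega
  have hcard : Fᶜ.card ≤ n + 1 := by rw [Finset.card_compl]; omega
  obtain ⟨G, hG, hGcard, z, hz⟩ := exists_facePrime_sup_span_singleton_eq hΔ hF hara hcard
  have hGcard' : (G.insertNone)ᶜ.card ≤ n := by
    simpa [Finset.card_compl] using hGcard
  obtain ⟨y, hy⟩ := exists_span_range_eq_facePrime (K := K) hGcard'
  have hyz : Ideal.span (Set.range y) ⊔ Ideal.span {rename some z} = facePrime K F.insertNone := by
    rw [hy, ← map_rename_some_facePrime, ← map_rename_some_facePrime, ← hz, Ideal.map_sup,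
      Ideal.map_span, Set.image_singleton]
  have hle : ((srIdeal K Δ).map (rename some)).radical ≤ Ideal.span (Set.range y) := by
    rw [hy, (facePrime_isPrime _).radical_le_iff, ← map_rename_some_facePrime]
    exact Ideal.map_mono (srIdeal_le_facePrime hΔ hG)
  rw [hn, srIdeal_coneUnion hΔ hF, ← hyz]
  exact ara_sup_span_singleton_mul_le ((ara_map_le _ _).trans hara) hle _ _

/-- for `K` algebraically closed and `F` a face of `Δ`,
`ara I_{Δ'} ≤ max (ara I_Δ + 1) (n − |F|)` where `Δ' = Δ ∪ co_{x₀}F`. -/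
theorem ara_coneUnion_le {V : Type*} [Fintype V] [DecidableEq V]
    (K : Type*) [Field K] [IsAlgClosed K]
    (Δ : Set (Finset V)) (hΔ : IsSimplicialComplex Δ) (F : Finset V) (hF : F ∈ Δ) :
    ara (srIdeal K (coneUnion Δ F)) ≤
      max (ara (srIdeal K Δ) + 1) (Fintype.card V - F.card) :=
  ara_coneUnion_le_general K (fun G H hHG hG => hΔ.2 G hG H hHG) hF
end
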